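/- Pythagorean addition is monotone with respect to the order ≤_(m,ES): for Pythagorean fuzzy numbers M, N, K ∈ L, if N ≤_(m,ES) K then M +_P N ≤_(m,ES) M +_P K. -/

import Mathlib

/-- The set `L` of Pythagorean fuzzy numbers, as a predicate on pairs of reals. -/
def IsPFN (N : ℝ × ℝ) : Prop :=
  N.1 ∈ Set.Icc (0:ℝ) 1 ∧ N.2 ∈ Set.Icc (0:ℝ) 1 ∧ N.1^2 + N.2^2 ≤ 1

/-- Pythagorean addition `M +_P N`. -/
noncomputable def pfAdd (M N : ℝ × ℝ) : ℝ × ℝ :=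
  (Real.sqrt (M.1^2 + N.1^2 - M.1^2 * N.1^2), M.2 * N.2)

/-- The expectation score function. -/
noncomputable def ES (N : ℝ × ℝ) : ℝ := (N.1^2 - N.2^2 + 1) / 2

/-- The relation `≤_(m,ES)` on `L`. -/
noncomputable def leME (N M : ℝ × ℝ) : Prop :=
  N.1 < M.1 ∨ (N.1 = M.1 ∧ ES N ≤ ES M)

/-!
The squared membership of `M +_P N` is `M.1² + (1 - M.1²) * N.1²`, strictly increasing in `N.1 ≥ 0`
as long as `M.1² < 1`. In the remaining case `M.1² = 1` forces `M.2 = 0`, and such an `M` absorbs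
every summand: a strict inequality of memberships then collapses to an equality of sums. On a tie
of memberships, comparing `ES` reverses the comparison of squared non-memberships, and these
multiply under `+_P`.
-/

theorem leME_iff {N K : ℝ × ℝ} :
    leME N K ↔ N.1 < K.1 ∨ (N.1 = K.1 ∧ K.2 ^ 2 ≤ N.2 ^ 2) := by
  refine or_congr_right (and_congr_right fun hfst ↦ ?_)
  unfold ES
  rw [hfst]
  constructor <;> intro h <;> linarith

theorem leME_refl (N : ℝ × ℝ) : leME N N :=
  Or.inr ⟨rfl, le_rfl⟩

theorem pfAdd_fst (M N : ℝ × ℝ) :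
    (pfAdd M N).1 = √(M.1 ^ 2 + (1 - M.1 ^ 2) * N.1 ^ 2) := by
  unfold pfAdd
  ring_nf

theorem pfAdd_fst_lt_pfAdd_fst {M N K : ℝ × ℝ} (hM : M.1 ^ 2 < 1) (hN : 0 ≤ N.1)
    (hNK : N.1 < K.1) : (pfAdd M N).1 < (pfAdd M K).1 := by
  have hM' : 0 < 1 - M.1 ^ 2 := sub_pos.2 hM
  rw [pfAdd_fst, pfAdd_fst]
  apply Real.sqrt_lt_sqrt
  · exact add_nonneg (sq_nonneg _) (mul_nonneg hM'.le (sq_nonneg _))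
  · gcongr

theorem pfAdd_eq_of_fst_sq_eq_one {M : ℝ × ℝ} (h₁ : M.1 ^ 2 = 1) (h₂ : M.2 = 0) (N : ℝ × ℝ) :
    pfAdd M N = (1, 0) := by
  simp [pfAdd, h₁, h₂]

theorem leME_pfAdd_of_fst_eq (M : ℝ × ℝ) {N K : ℝ × ℝ} (hfst : N.1 = K.1)
    (hsnd : K.2 ^ 2 ≤ N.2 ^ 2) : leME (pfAdd M N) (pfAdd M K) := by
  refine leME_iff.2 (Or.inr ⟨by rw [pfAdd_fst, pfAdd_fst, hfst], ?_⟩)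
  calc (M.2 * K.2) ^ 2 = M.2 ^ 2 * K.2 ^ 2 := mul_pow ..
    _ ≤ M.2 ^ 2 * N.2 ^ 2 := by gcongr
    _ = (M.2 * N.2) ^ 2 := (mul_pow ..).symm

theorem pfAdd_mono_general {M N K : ℝ × ℝ} (hM : M.1 ^ 2 + M.2 ^ 2 ≤ 1) (hN : 0 ≤ N.1)
    (h : leME N K) : leME (pfAdd M N) (pfAdd M K) := by
  obtain hlt | ⟨hfst, hsnd⟩ := leME_iff.1 h
  · have hM₁ : M.1 ^ 2 ≤ 1 := by linarith [sq_nonneg M.2]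
    obtain hM₁ | hM₁ := hM₁.lt_or_eq
    · exact Or.inl (pfAdd_fst_lt_pfAdd_fst hM₁ hN hlt)
    · have hM₂ : M.2 = 0 := (sq_nonpos_iff _).1 (by linarith)
      rw [pfAdd_eq_of_fst_sq_eq_one hM₁ hM₂, pfAdd_eq_of_fst_sq_eq_one hM₁ hM₂]
      exact leME_refl _
  · exact leME_pfAdd_of_fst_eq M hfst hsnd

/-- Pythagorean addition is monotone with respect to `≤_(m,ES)`. -/
theorem pfAdd_mono (M N K : ℝ × ℝ) (hM : IsPFN M) (hN : IsPFN N) (hK : IsPFN K)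
    (h : leME N K) : leME (pfAdd M N) (pfAdd M K) :=
  pfAdd_mono_general hM.2.2 hN.1.1 h
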